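/- Suppose u : ℝⁿ → ℝ is smooth, nonnegative, subharmonic (Δu ≥ 0), and globally Lipschitz with L := sup_{ℝⁿ} |∇u| < ∞. Then there exists a constant C depending only on n and L such that for every t > 0 with ∇u ≠ 0 at every point of {u = t} (so that {u = t} is a smooth hypersurface) and every R > 1, the level-set flux satisfies ∫_{B_R ∩ {u = t}} |∇u| dH^{n−1} ≤ C R^{n−1}. -/

import Mathlib

/-!
The flux is compared with a weighted energy of `u` near the level set, which is then bounded by
integration by parts.

*Energy bound* (`energy_bound`). Let `η ≥ 0` be a cutoff equal to `1` on the ball of radius `2R`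
with `∫ |∇η| ≲ R ^ (n - 1)`, and let `φ s = π / 2 + arctan ((s - t) / ε)`, a nondecreasing
function with values in `[0, π]`. Integrating `div (η φ(u) ∇u)` gives
`∫ η φ'(u) |∇u|² = - ∫ η φ(u) Δu - ∫ φ(u) ∇η · ∇u ≤ π L ∫ |∇η|`, since `Δu ≥ 0`.

*Flux versus energy* (`flux_le_energy`). No coarea formula or divergence theorem on level sets is
used. For small `ε`, consider the balls about points `x` of the compact set
`{u = t} ∩ closedBall 0 R` with radius `r x = ε / (2 |∇u x|)`. There `|u - t| ≤ ε`, so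
`φ'(u) ≥ 1 / (2 ε)`, and the energy of the ball is at least a constant times
`|∇u x| r(x) ^ (n - 1)`. On the five times larger ball `{u = t}` is a Lipschitz graph over the
hyperplane orthogonal to `∇u x` (`hausdorff_level_le`), so its flux is at most a constant times
the same quantity. The Vitali covering lemma allows these local comparisons to be summed, with a
constant that depends on `n` only.
-/

open MeasureTheory Metric Set
open scoped RealInnerProductSpace ENNReal

/-- Euclidean space `ℝⁿ`. -/
abbrev Euc (n : ℕ) := EuclideanSpace ℝ (Fin n)

/-- The Laplacian `Δu` of a function `u : ℝⁿ → ℝ`. -/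
noncomputable def lap {n : ℕ} (u : Euc n → ℝ) (x : Euc n) : ℝ :=
  ∑ i : Fin n,
    fderiv ℝ (fun y => fderiv ℝ u y (EuclideanSpace.single i 1)) x (EuclideanSpace.single i 1)

/-- The divergence `div Y = Σ_α ∂Y^α/∂x_α` of a vector field `Y`. -/
noncomputable def vdiv {n : ℕ} (Y : Euc n → Euc n) (x : Euc n) : ℝ :=
  ∑ i : Fin n, fderiv ℝ Y x (EuclideanSpace.single i 1) i

/-- `DY(p,q)(x) = Σ_{α,β} (∂Y^α/∂x_β)(x) p_α q_β`. -/
noncomputable def DYbil {n : ℕ} (Y : Euc n → Euc n) (p q x : Euc n) : ℝ :=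
  ∑ α : Fin n, ∑ β : Fin n,
    fderiv ℝ Y x (EuclideanSpace.single β 1) α * p α * q β

/-- The rescaled function `u_κ(x) = R⁻¹ u(x₀ + R x)` (with `κ = R⁴`). -/
noncomputable def resc {n : ℕ} (u : Euc n → ℝ) (x₀ : Euc n) (R : ℝ) (x : Euc n) : ℝ :=
  R⁻¹ * u (x₀ + R • x)

/-! ### The energy bound -/

/-- Cutoff functions at scale `R`: the gradient has `L¹` norm of order `R ^ m` in dimension
`m + 1`, by scaling a single bump function. -/
lemma exists_cutoff (m : ℕ) : ∃ M : ℝ, 0 ≤ M ∧ ∀ R > (0 : ℝ), ∃ η : Euc (m + 1) → ℝ,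
    ContDiff ℝ (⊤ : ℕ∞) η ∧ HasCompactSupport η ∧ (∀ x, 0 ≤ η x) ∧
    (∀ x ∈ closedBall (0 : Euc (m + 1)) (2 * R), η x = 1) ∧
    ∫ x, ‖fderiv ℝ η x‖ ≤ M * R ^ m := by
  let b : ContDiffBump (0 : Euc (m + 1)) := ⟨2, 3, by norm_num, by norm_num⟩
  refine ⟨∫ x, ‖fderiv ℝ b x‖, integral_nonneg fun _ => norm_nonneg _, fun R hR => ?_⟩
  refine ⟨fun x => b (R⁻¹ • x), ?_, ?_, fun x => b.nonneg, fun x hx => ?_, ?_⟩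
  · exact b.contDiff.comp (contDiff_const_smul _)
  · exact b.hasCompactSupport.comp_smul (inv_ne_zero hR.ne')
  · apply b.one_of_mem_closedBall
    rw [mem_closedBall_zero_iff] at hx ⊢
    rw [norm_smul, norm_inv, Real.norm_of_nonneg hR.le]
    change R⁻¹ * ‖x‖ ≤ 2
    rw [inv_mul_le_iff₀ hR]
    linarith
  · have h1 : ∀ x, ‖fderiv ℝ (fun x => b (R⁻¹ • x)) x‖ = R⁻¹ * ‖fderiv ℝ b (R⁻¹ • x)‖ := by
      intro x
      rw [fderiv_comp_smul, norm_smul, norm_inv, Real.norm_of_nonneg hR.le]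
    simp_rw [h1]
    rw [integral_const_mul,
      Measure.integral_comp_inv_smul_of_nonneg volume (fun x => ‖fderiv ℝ b x‖) hR.le]
    rw [finrank_euclideanSpace_fin, smul_eq_mul, pow_succ]
    apply le_of_eq
    field_simp

/-- The divergence theorem for a compactly supported field, one coordinate at a time. -/
lemma integral_fderiv_eq_zero_of_compact {n : ℕ} (F : Euc n → ℝ) (hF : ContDiff ℝ 1 F)
    (hc : HasCompactSupport F) (v : Euc n) :
    Integrable (fun x => fderiv ℝ F x v) ∧ ∫ x, fderiv ℝ F x v = 0 := by
  have hi : Integrable (fun x => fderiv ℝ F x v) := by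
    apply Continuous.integrable_of_hasCompactSupport
    · exact (hF.continuous_fderiv one_ne_zero).clm_apply continuous_const
    · exact hc.fderiv_apply ℝ v
  refine ⟨hi, ?_⟩
  have := integral_mul_fderiv_eq_neg_fderiv_mul_of_integrable (μ := volume)
    (f := fun _ : Euc n => (1 : ℝ)) (g := F) (v := v) (by simp) (by simpa using hi)
    (by simpa using hF.continuous.integrable_of_hasCompactSupport hc)
    (fun _ _ => by fun_prop) (fun x _ => (hF.differentiable one_ne_zero) x)
  simpa using this

lemma fderiv_eq_sum {n : ℕ} (u : Euc n → ℝ) (x : Euc n) (w : Euc n) :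
    fderiv ℝ u x w = ∑ i, w i * fderiv ℝ u x (EuclideanSpace.single i 1) := by
  have hw : w = ∑ i, w i • (EuclideanSpace.single i (1 : ℝ) : Euc n) := by
    simpa using ((EuclideanSpace.basisFun (Fin n) ℝ).sum_repr w).symm
  conv_lhs => rw [hw]
  simp [map_sum]

lemma gradient_apply {n : ℕ} (u : Euc n → ℝ) (x : Euc n) (i : Fin n) :
    gradient u x i = fderiv ℝ u x (EuclideanSpace.single i 1) := by
  rw [← inner_gradient_left, EuclideanSpace.inner_single_right]
  simp

lemma norm_gradient {n : ℕ} (u : Euc n → ℝ) (x : Euc n) :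
    ‖gradient u x‖ = ‖fderiv ℝ u x‖ := by
  rw [← toDual_gradient, LinearIsometryEquiv.norm_map]

/-- The Caccioppoli-type estimate: test `Δu ≥ 0` against `η (π / 2 + arctan ((u - t) / ε))`. -/
lemma energy_bound {n : ℕ} (u η : Euc n → ℝ) (L t ε : ℝ)
    (hu : ContDiff ℝ (⊤ : ℕ∞) u) (hlap : ∀ x, 0 ≤ lap u x) (hL : ∀ x, ‖gradient u x‖ ≤ L)
    (hη : ContDiff ℝ (⊤ : ℕ∞) η) (hc : HasCompactSupport η) (h0 : ∀ x, 0 ≤ η x) :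
    Integrable (fun x => η x * (ε⁻¹ / (1 + ((u x - t) / ε) ^ 2)) * ‖gradient u x‖ ^ 2) ∧
    ∫ x, η x * (ε⁻¹ / (1 + ((u x - t) / ε) ^ 2)) * ‖gradient u x‖ ^ 2
      ≤ Real.pi * L * ∫ x, ‖fderiv ℝ η x‖ := by
  set φ : ℝ → ℝ := fun s => Real.pi / 2 + Real.arctan ((s - t) / ε) with hφ
  have hφ0 : ∀ s, 0 ≤ φ s := fun s => by
    have := Real.neg_pi_div_two_lt_arctan ((s - t) / ε)
    simp only [hφ]; linarith
  have hφ1 : ∀ s, φ s ≤ Real.pi := fun s => by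
    have := Real.arctan_lt_pi_div_two ((s - t) / ε)
    simp only [hφ]; linarith
  have hφc : ContDiff ℝ (⊤ : ℕ∞) φ := by
    have : ContDiff ℝ (⊤ : ℕ∞) fun s : ℝ => (s - t) / ε := by fun_prop
    exact contDiff_const.add (Real.contDiff_arctan.comp this)
  have hφd : ∀ s, HasDerivAt φ (ε⁻¹ / (1 + ((s - t) / ε) ^ 2)) s := fun s => by
    have h1 : HasDerivAt (fun s : ℝ => (s - t) / ε) (1 / ε) s :=
      ((hasDerivAt_id s).sub_const t).div_const ε
    have h2 := h1.arctan.const_add (Real.pi / 2)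
    rwa [one_div_mul_eq_div, one_div] at h2
  let e : Fin n → Euc n := fun i => EuclideanSpace.single i 1
  let D : Fin n → Euc n → ℝ := fun i x => fderiv ℝ u x (e i)
  have hD : ∀ i, ContDiff ℝ (⊤ : ℕ∞) (D i) := fun i =>
    (hu.fderiv_right (m := (⊤ : ℕ∞)) (by simp)).clm_apply contDiff_const
  have hgc : Continuous fun x => ‖gradient u x‖ := by
    simp_rw [norm_gradient]
    exact (hu.continuous_fderiv (by simp)).norm
  let F : Fin n → Euc n → ℝ := fun i x => η x * (φ (u x) * D i x)
  have hF : ∀ i, ContDiff ℝ (⊤ : ℕ∞) (F i) := fun i => hη.mul ((hφc.comp hu).mul (hD i))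
  have hFc : ∀ i, HasCompactSupport (F i) := fun i => hc.mul_right
  have hFd : ∀ i x, fderiv ℝ (F i) x (e i) = η x * φ (u x) * fderiv ℝ (D i) x (e i)
      + η x * (ε⁻¹ / (1 + ((u x - t) / ε) ^ 2)) * D i x ^ 2
      + φ (u x) * (D i x * fderiv ℝ η x (e i)) := by
    intro i x
    have a1 : HasFDerivAt η (fderiv ℝ η x) x := (hη.differentiable (by simp) x).hasFDerivAt
    have a2 : HasFDerivAt u (fderiv ℝ u x) x := (hu.differentiable (by simp) x).hasFDerivAt
    have a3 : HasFDerivAt (D i) (fderiv ℝ (D i) x) x :=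
      ((hD i).differentiable (by simp) x).hasFDerivAt
    have a4 := (hφd (u x)).comp_hasFDerivAt x a2
    have a5 := (a1.mul (a4.mul a3)).fderiv
    change fderiv ℝ (η * (φ ∘ u * D i)) x (e i) = _
    rw [a5]
    simp only [add_apply, smul_apply, smul_eq_mul,
      Function.comp_apply, Pi.mul_apply]
    change η x * (φ (u x) * fderiv ℝ (D i) x (e i)
      + D i x * (ε⁻¹ / (1 + ((u x - t) / ε) ^ 2) * D i x))
      + φ (u x) * D i x * fderiv ℝ η x (e i) = _
    ring
  have hsum : ∀ x, ∑ i, fderiv ℝ (F i) x (e i) = η x * φ (u x) * lap u x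
      + η x * (ε⁻¹ / (1 + ((u x - t) / ε) ^ 2)) * ‖gradient u x‖ ^ 2
      + φ (u x) * fderiv ℝ η x (gradient u x) := by
    intro x
    simp_rw [hFd, Finset.sum_add_distrib, ← Finset.mul_sum]
    rw [fderiv_eq_sum η x (gradient u x), EuclideanSpace.norm_sq_eq]
    simp_rw [gradient_apply, Real.norm_eq_abs, sq_abs]
    rfl
  have hGi : Integrable
      (fun x => η x * (ε⁻¹ / (1 + ((u x - t) / ε) ^ 2)) * ‖gradient u x‖ ^ 2) := by
    apply Continuous.integrable_of_hasCompactSupport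
    · have : Continuous fun x => ε⁻¹ / (1 + ((u x - t) / ε) ^ 2) := by
        apply continuous_const.div
        · have := hu.continuous
          fun_prop
        · intro x; positivity
      exact (hη.continuous.mul this).mul (hgc.pow 2)
    · exact hc.mul_right.mul_right
  refine ⟨hGi, ?_⟩
  have hηi : Integrable fun x => ‖fderiv ℝ η x‖ :=
    ((hη.continuous_fderiv (by simp)).integrable_of_hasCompactSupport (hc.fderiv ℝ)).norm
  have hdiv : ∀ i, Integrable (fun x => fderiv ℝ (F i) x (e i)) ∧
      ∫ x, fderiv ℝ (F i) x (e i) = 0 := fun i =>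
    integral_fderiv_eq_zero_of_compact (F i) ((hF i).of_le (by simp)) (hFc i) (e i)
  have hdi : Integrable fun x => ∑ i, fderiv ℝ (F i) x (e i) :=
    integrable_finsetSum _ fun i _ => (hdiv i).1
  have hd0 : ∫ x, ∑ i, fderiv ℝ (F i) x (e i) = 0 := by
    rw [integral_finsetSum _ fun i _ => (hdiv i).1]
    exact Finset.sum_eq_zero fun i _ => (hdiv i).2
  calc _ ≤ ∫ x, ((∑ i, fderiv ℝ (F i) x (e i)) + Real.pi * L * ‖fderiv ℝ η x‖) := by
        apply integral_mono hGi (hdi.add (hηi.const_mul _))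
        intro x
        have h1 : 0 ≤ η x * φ (u x) * lap u x := mul_nonneg (mul_nonneg (h0 x) (hφ0 _)) (hlap x)
        have h2 : |φ (u x) * fderiv ℝ η x (gradient u x)| ≤ Real.pi * L * ‖fderiv ℝ η x‖ := by
          rw [abs_mul, abs_of_nonneg (hφ0 _), mul_assoc]
          apply mul_le_mul (hφ1 _) _ (abs_nonneg _) Real.pi_pos.le
          rw [mul_comm]
          exact ((fderiv ℝ η x).le_opNorm _).trans
            (mul_le_mul_of_nonneg_left (hL x) (norm_nonneg _))
        have h3 := neg_le_of_abs_le h2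
        change _ ≤ (∑ i, fderiv ℝ (F i) x (e i)) + Real.pi * L * ‖fderiv ℝ η x‖
        rw [hsum]
        linarith
    _ = _ := by
        rw [integral_add hdi (hηi.const_mul _), hd0, zero_add, integral_const_mul]

/-! ### Hausdorff measure of level sets in small balls -/

/-- Orthogonal projection along a nonzero vector `p`, in orthonormal coordinates: a nonexpansive
map which is antilipschitz on pairs of points whose difference is far from parallel to `p`. -/
lemma exists_proj (m : ℕ) (p : Euc (m + 1)) (hp : p ≠ 0) : ∃ P : Euc (m + 1) →ₗ[ℝ] Euc m,
    (∀ v, ‖P v‖ ≤ ‖v‖) ∧ ∀ v, |⟪p, v⟫| ≤ ‖p‖ / 2 * ‖v‖ → ‖v‖ ≤ 2 * ‖P v‖ := by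
  have : Fact (Module.finrank ℝ (Euc (m + 1)) = m + 1) := ⟨finrank_euclideanSpace_fin⟩
  let b := OrthonormalBasis.fromOrthogonalSpanSingleton (𝕜 := ℝ) m hp
  have hp₀ : 0 < ‖p‖ := norm_pos_iff.2 hp
  have hPn : ∀ v : Euc (m + 1), ‖b.repr ((ℝ ∙ p)ᗮ.orthogonalProjectionOnto v)‖
      = ‖(ℝ ∙ p)ᗮ.orthogonalProjectionOnto v‖ := fun v => LinearIsometryEquiv.norm_map _ _
  refine ⟨b.repr.toLinearEquiv.toLinearMap ∘ₗ
    ((ℝ ∙ p)ᗮ.orthogonalProjectionOnto : _ →ₗ[ℝ] _), fun v => ?_, fun v hv => ?_⟩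
  · exact (hPn v).le.trans (Submodule.norm_orthogonalProjectionOnto_apply_le _ v)
  · have h1 := Submodule.norm_sq_eq_add_norm_sq_projection v (ℝ ∙ p)
    have h2 : ‖(ℝ ∙ p).orthogonalProjectionOnto v‖ ≤ ‖v‖ / 2 := by
      have : ((ℝ ∙ p).orthogonalProjectionOnto v : Euc (m + 1)) = (⟪p, v⟫ / ‖p‖ ^ 2) • p :=
        Submodule.starProjection_singleton ℝ v
      rw [Submodule.coe_norm, this, norm_smul, norm_div, Real.norm_eq_abs, norm_pow, norm_norm,
        div_mul_eq_mul_div, div_le_iff₀ (by positivity)]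
      nlinarith
    change ‖v‖ ≤ 2 * ‖b.repr ((ℝ ∙ p)ᗮ.orthogonalProjectionOnto v)‖
    rw [hPn]
    have h3 := norm_nonneg ((ℝ ∙ p).orthogonalProjectionOnto v)
    apply le_of_sq_le_sq _ (by positivity)
    nlinarith [sq_nonneg ‖v‖]

lemma isAddHaarMeasure_hausdorff (m : ℕ) :
    (μH[(m : ℝ)] : Measure (Euc m)).IsAddHaarMeasure := by
  have := isAddHaarMeasure_hausdorffMeasure (E := Euc m)
  rwa [finrank_euclideanSpace_fin] at this

/-- Where `∇u` varies little, a level set is a Lipschitz graph, so its Hausdorff measure in a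
ball of radius `ρ` is of order `ρ ^ m`. -/
lemma hausdorff_level_le (m : ℕ) (u : Euc (m + 1) → ℝ) (hu : Differentiable ℝ u)
    (x : Euc (m + 1)) (ρ t : ℝ) (hρ : 0 ≤ ρ) (hx : gradient u x ≠ 0)
    (hb : ∀ y ∈ closedBall x ρ, ‖fderiv ℝ u y - fderiv ℝ u x‖ ≤ ‖gradient u x‖ / 2) :
    μH[(m : ℝ)] (closedBall x ρ ∩ {y | u y = t})
      ≤ 2 ^ m * (ENNReal.ofReal (ρ ^ m) * μH[(m : ℝ)] (closedBall (0 : Euc m) 1)) := by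
  obtain ⟨P, hP1, hP2⟩ := exists_proj m _ hx
  set S := closedBall x ρ ∩ {y | u y = t} with hS
  have hanti : AntilipschitzWith 2 (fun y : S => P y) := by
    refine AntilipschitzWith.of_le_mul_dist fun y z => ?_
    rw [Subtype.dist_eq, dist_eq_norm, dist_eq_norm, ← map_sub]
    apply hP2
    have := (convex_closedBall x ρ).norm_image_sub_le_of_norm_fderiv_le'
      (fun w _ => hu w) hb z.2.1 y.2.1
    have hy : u y = t := y.2.2
    have hz : u z = t := z.2.2
    rw [hy, hz, sub_self, zero_sub, norm_neg, Real.norm_eq_abs] at this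
    rwa [inner_gradient_left]
  have h1 := hanti.le_hausdorffMeasure_image (d := (m : ℝ)) (by positivity) univ
  have h2 : μH[(m : ℝ)] S = μH[(m : ℝ)] (univ : Set S) := by
    rw [← (isometry_subtype_coe (s := S)).hausdorffMeasure_image (Or.inl (by positivity)),
      image_univ, Subtype.range_coe]
  rw [h2]
  refine h1.trans ?_
  rw [ENNReal.rpow_natCast]
  refine mul_le_mul' (by simp) ?_
  have hsub : (fun y : S => P y) '' univ ⊆ closedBall (P x) ρ := by
    rintro _ ⟨y, -, rfl⟩
    rw [mem_closedBall, dist_eq_norm, ← map_sub]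
    exact (hP1 _).trans (by simpa [dist_eq_norm] using y.2.1)
  refine (measure_mono hsub).trans ?_
  have := isAddHaarMeasure_hausdorff m
  rw [Measure.addHaar_closedBall' _ _ hρ, finrank_euclideanSpace_fin]

lemma hausdorff_unitBall_lt_top (m : ℕ) : μH[(m : ℝ)] (closedBall (0 : Euc m) 1) < ⊤ := by
  have := isAddHaarMeasure_hausdorff m
  exact (isCompact_closedBall _ _).measure_lt_top

/-! ### Comparison of flux and energy -/

/-- A discrete substitute for the coarea formula. On a ball about `x ∈ {u = t}` of radius
`r x = ε / (2 ‖∇u x‖)` the gradient is almost constant, so the ball lies in `{|u - t| ≤ ε}`, the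
weighted energy of the ball is of order `‖∇u x‖ * r x ^ m`, and the flux through the five times
larger ball is at most of that order. The Vitali covering lemma sums these comparisons. -/
lemma flux_le_energy (m : ℕ) : ∃ C₁ : ℝ≥0∞, C₁ < ⊤ ∧ ∀ u : Euc (m + 1) → ℝ,
    ContDiff ℝ (⊤ : ℕ∞) u → ∀ t : ℝ, (∀ x, u x = t → gradient u x ≠ 0) → ∀ R > (1 : ℝ),
    ∃ ε > (0 : ℝ), ∀ η : Euc (m + 1) → ℝ,
      (∀ x ∈ closedBall (0 : Euc (m + 1)) (2 * R), η x = 1) →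
      ∫⁻ x in ball (0 : Euc (m + 1)) R ∩ {x | u x = t}, ENNReal.ofReal ‖gradient u x‖ ∂μH[(m : ℝ)]
        ≤ C₁ * ∫⁻ x, ENNReal.ofReal
          (η x * (ε⁻¹ / (1 + ((u x - t) / ε) ^ 2)) * ‖gradient u x‖ ^ 2) := by
  set h := μH[(m : ℝ)] (closedBall (0 : Euc m) 1) with hh
  set ω := volume (closedBall (0 : Euc (m + 1)) 1) with hω
  have hω0 : ω ≠ 0 := (measure_closedBall_pos _ _ one_pos).ne'
  have hωt : ω ≠ ⊤ := measure_closedBall_lt_top.ne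
  refine ⟨ENNReal.ofReal (24 * 10 ^ m) * h / ω, ?_, ?_⟩
  · exact ENNReal.div_lt_top
      (ENNReal.mul_ne_top ENNReal.ofReal_ne_top (hausdorff_unitBall_lt_top m).ne) hω0
  intro u hu t hreg R hR
  have hud : Differentiable ℝ u := hu.differentiable (by simp)
  have hfc : Continuous (fderiv ℝ u) := hu.continuous_fderiv (by simp)
  have hgc : Continuous fun x => ‖gradient u x‖ := by
    simp_rw [norm_gradient]
    exact hfc.norm
  set K := closedBall (0 : Euc (m + 1)) R ∩ {x | u x = t} with hK
  have hKc : IsCompact K :=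
    (isCompact_closedBall _ _).inter_right (isClosed_eq hu.continuous continuous_const)
  obtain ⟨c, hc0, hc⟩ : ∃ c > 0, ∀ x ∈ K, c ≤ ‖gradient u x‖ := by
    rcases K.eq_empty_or_nonempty with hE | hE
    · exact ⟨1, one_pos, by simp [hE]⟩
    · obtain ⟨x₀, hx₀, hmin⟩ := hKc.exists_isMinOn hE hgc.continuousOn
      exact ⟨_, norm_pos_iff.2 (hreg x₀ hx₀.2), fun x hx => hmin hx⟩
  have huc : UniformContinuousOn (fderiv ℝ u) (closedBall 0 (R + 1)) :=
    (isCompact_closedBall _ _).uniformContinuousOn_of_continuous hfc.continuousOn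
  obtain ⟨δ, hδ0, hδ⟩ := Metric.uniformContinuousOn_iff_le.1 huc (c / 2) (by positivity)
  set δ₁ := min δ 1 with hδ₁
  have hδ₁0 : 0 < δ₁ := lt_min hδ0 one_pos
  have hball : ∀ x ∈ K, closedBall x δ₁ ⊆ closedBall 0 (R + 1) := fun x hx => by
    apply closedBall_subset_closedBall'
    have h1 : dist x 0 ≤ R := hx.1
    have h2 : δ₁ ≤ 1 := min_le_right _ _
    linarith
  have hosc : ∀ x ∈ K, ∀ y ∈ closedBall x δ₁,
      ‖fderiv ℝ u y - fderiv ℝ u x‖ ≤ ‖gradient u x‖ / 2 := fun x hx y hy => by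
    have h1 := hδ y (hball x hx hy) x (hball x hx (mem_closedBall_self hδ₁0.le))
      (le_trans hy (min_le_left _ _))
    rw [dist_eq_norm] at h1
    linarith [hc x hx]
  -- With this `ε`, the five times enlarged balls have radius at most `δ₁`.
  set ε := 2 * c * δ₁ / 5 with hεd
  have hε : 0 < ε := by positivity
  refine ⟨ε, hε, fun η hη => ?_⟩
  set G : Euc (m + 1) → ℝ := fun x =>
    η x * (ε⁻¹ / (1 + ((u x - t) / ε) ^ 2)) * ‖gradient u x‖ ^ 2 with hG
  set r : Euc (m + 1) → ℝ := fun x => ε / (2 * ‖gradient u x‖) with hr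
  have hgpos : ∀ x ∈ K, 0 < ‖gradient u x‖ := fun x hx => hc0.trans_le (hc x hx)
  have hrpos : ∀ x ∈ K, 0 < r x := fun x hx => div_pos hε (by linarith [hgpos x hx])
  have hr5 : ∀ x ∈ K, 5 * r x ≤ δ₁ := fun x hx => by
    have h1 := hgpos x hx
    have h2 := hc x hx
    simp only [hr, hεd]
    rw [← mul_div_assoc, div_le_iff₀ (by positivity)]
    nlinarith
  have hgr : ∀ x ∈ K, ε = 2 * ‖gradient u x‖ * r x := fun x hx => by
    have h1 := hgpos x hx
    simp only [hr]
    field_simp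
  have hupper : ∀ x ∈ K,
      ∫⁻ y in closedBall x (5 * r x) ∩ {y | u y = t}, ENNReal.ofReal ‖gradient u y‖ ∂μH[(m : ℝ)]
        ≤ ENNReal.ofReal (24 * 10 ^ m) * h * ENNReal.ofReal (‖gradient u x‖ * r x ^ m / 16) := by
    intro x hx
    have h5 : 0 ≤ 5 * r x := by linarith [hrpos x hx]
    have hsub : closedBall x (5 * r x) ⊆ closedBall x δ₁ := closedBall_subset_closedBall (hr5 x hx)
    have hH := hausdorff_level_le m u hud x (5 * r x) t h5 (hreg x hx.2)
      fun y hy => hosc x hx y (hsub hy)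
    calc _ ≤ ∫⁻ y in closedBall x (5 * r x) ∩ {y | u y = t},
          ENNReal.ofReal (3 / 2 * ‖gradient u x‖) ∂μH[(m : ℝ)] := by
          apply setLIntegral_mono measurable_const
          intro y hy
          apply ENNReal.ofReal_le_ofReal
          have h1 := hosc x hx y (hsub hy.1)
          have h2 := norm_sub_norm_le (fderiv ℝ u y) (fderiv ℝ u x)
          rw [← norm_gradient, ← norm_gradient] at h2
          linarith
      _ ≤ ENNReal.ofReal (3 / 2 * ‖gradient u x‖)
          * (2 ^ m * (ENNReal.ofReal ((5 * r x) ^ m) * h)) := by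
          rw [setLIntegral_const]
          gcongr
      _ = _ := by
          have e2 : (2 : ℝ≥0∞) ^ m = ENNReal.ofReal (2 ^ m) := by
            rw [ENNReal.ofReal_pow (by norm_num)]; norm_num
          have hrm : 0 ≤ r x ^ m := pow_nonneg (hrpos x hx).le _
          rw [e2, ← mul_assoc, ← mul_assoc, mul_right_comm _ h, ← ENNReal.ofReal_mul (by positivity),
            ← ENNReal.ofReal_mul (by positivity), ← ENNReal.ofReal_mul (by positivity)]
          congr 2
          rw [mul_pow, show (10 : ℝ) = 2 * 5 by norm_num, mul_pow]
          ring
  have hlower : ∀ x ∈ K, ENNReal.ofReal (‖gradient u x‖ * r x ^ m / 16) * ω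
      ≤ ∫⁻ y in closedBall x (r x), ENNReal.ofReal (G y) := by
    intro x hx
    have hr0 := hrpos x hx
    have hg0 := hgpos x hx
    have hsub : closedBall x (r x) ⊆ closedBall x δ₁ :=
      closedBall_subset_closedBall (by linarith [hr5 x hx])
    have hval : ∀ y ∈ closedBall x (r x),
        (2 * ε)⁻¹ * (‖gradient u x‖ / 2) ^ 2 ≤ G y := by
      intro y hy
      have hy1 : η y = 1 := hη y (closedBall_subset_closedBall (by linarith)
        (hball x hx (hsub hy)))
      have h1 := hosc x hx y (hsub hy)
      have h2 := norm_sub_norm_le (fderiv ℝ u x) (fderiv ℝ u y)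
      rw [← norm_gradient, ← norm_gradient, norm_sub_rev] at h2
      have h3 : |u y - t| ≤ ε := by
        have h4 := (convex_closedBall x (r x)).norm_image_sub_le_of_norm_fderiv_le
          (f := u) (𝕜 := ℝ) (C := 2 * ‖gradient u x‖) (fun w _ => hud w) (fun w hw => by
            have h5 := hosc x hx w (hsub hw)
            have h6 := norm_sub_norm_le (fderiv ℝ u w) (fderiv ℝ u x)
            rw [← norm_gradient u x] at h6
            linarith) (mem_closedBall_self hr0.le) hy
        rw [show u x = t from hx.2, Real.norm_eq_abs] at h4
        refine h4.trans ?_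
        rw [hgr x hx]
        rw [mem_closedBall, dist_eq_norm] at hy
        gcongr
      have h7 : ((u y - t) / ε) ^ 2 ≤ 1 := by
        rw [sq_le_one_iff_abs_le_one, abs_div, abs_of_pos hε, div_le_one hε]
        exact h3
      simp only [hG, hy1, one_mul]
      apply mul_le_mul
      · rw [mul_inv, div_eq_mul_inv, mul_comm]
        gcongr
        linarith
      · gcongr
        linarith
      · positivity
      · positivity
    calc _ = ENNReal.ofReal ((2 * ε)⁻¹ * (‖gradient u x‖ / 2) ^ 2)
          * volume (closedBall x (r x)) := by
          rw [Measure.addHaar_closedBall' _ _ hr0.le, finrank_euclideanSpace_fin, ← mul_assoc,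
            ← ENNReal.ofReal_mul (by positivity)]
          congr 2
          rw [hgr x hx]
          field_simp
          ring
      _ = ∫⁻ y in closedBall x (r x),
          ENNReal.ofReal ((2 * ε)⁻¹ * (‖gradient u x‖ / 2) ^ 2) := by rw [setLIntegral_const]
      _ ≤ _ := setLIntegral_mono' measurableSet_closedBall
          fun y hy => ENNReal.ofReal_le_ofReal (hval y hy)
  obtain ⟨V, hVK, hVd, hVc⟩ := Vitali.exists_disjoint_subfamily_covering_enlargement_closedBall
    K id r δ₁ (fun a ha => by linarith [hr5 a ha, hrpos a ha]) 5 (by norm_num)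
  have hVcount : V.Countable := hVd.countable_of_nonempty_interior fun a ha => by
    refine ⟨a, ball_subset_interior_closedBall (mem_ball_self (hrpos a (hVK ha)))⟩
  have := hVcount.to_subtype
  calc _ ≤ ∫⁻ x in ⋃ a : V, closedBall (a : Euc (m + 1)) (5 * r a) ∩ {y | u y = t},
        ENNReal.ofReal ‖gradient u x‖ ∂μH[(m : ℝ)] := by
        apply lintegral_mono_set
        rintro x ⟨hx1, hx2⟩
        have hxK : x ∈ K := ⟨ball_subset_closedBall hx1, hx2⟩
        obtain ⟨b, hb, hsub⟩ := hVc x hxK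
        exact mem_iUnion.2 ⟨⟨b, hb⟩, hsub (mem_closedBall_self (hrpos x hxK).le), hx2⟩
    _ ≤ ∑' a : V, ∫⁻ x in closedBall (a : Euc (m + 1)) (5 * r a) ∩ {y | u y = t},
        ENNReal.ofReal ‖gradient u x‖ ∂μH[(m : ℝ)] := lintegral_iUnion_le _ _
    _ ≤ ∑' a : V, ENNReal.ofReal (24 * 10 ^ m) * h / ω
        * ∫⁻ y in closedBall (a : Euc (m + 1)) (r a), ENNReal.ofReal (G y) := by
        refine ENNReal.tsum_le_tsum fun a => (hupper a (hVK a.2)).trans ?_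
        refine le_trans (le_of_eq ?_) (mul_le_mul_right (hlower a (hVK a.2)) _)
        rw [mul_comm (ENNReal.ofReal (_ / 16)) ω, ← mul_assoc, ENNReal.div_mul_cancel hω0 hωt]
    _ = ENNReal.ofReal (24 * 10 ^ m) * h / ω
        * ∫⁻ y in ⋃ a ∈ V, closedBall (a : Euc (m + 1)) (r a), ENNReal.ofReal (G y) := by
        rw [ENNReal.tsum_mul_left,
          lintegral_biUnion hVcount (s := fun a => closedBall a (r a))
            (fun _ _ => measurableSet_closedBall) hVd]
    _ ≤ _ := by
        gcongr
        exact Measure.restrict_le_self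

/-! ### The flux bound -/

theorem level_set_flux_bound (n : ℕ) (hn : 2 ≤ n) (L : ℝ) :
    ∃ C > (0 : ℝ), ∀ u : Euc n → ℝ,
      ContDiff ℝ (⊤ : ℕ∞) u → (∀ x, 0 ≤ u x) → (∀ x, 0 ≤ lap u x) →
      (∀ x, ‖gradient u x‖ ≤ L) →
      ∀ t > (0 : ℝ), (∀ x, u x = t → gradient u x ≠ 0) →
      ∀ R > (1 : ℝ),
        ∫ x in ball (0 : Euc n) R ∩ {x | u x = t}, ‖gradient u x‖ ∂μH[(n : ℝ) - 1]
          ≤ C * R ^ ((n : ℝ) - 1) := by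
  obtain ⟨m, rfl⟩ : ∃ m, n = m + 1 := ⟨n - 1, by omega⟩
  have hm : ((m + 1 : ℕ) : ℝ) - 1 = m := by push_cast; ring
  simp_rw [hm, Real.rpow_natCast]
  obtain ⟨M, hM0, hM⟩ := exists_cutoff m
  obtain ⟨C₁, hC₁, hflux⟩ := flux_le_energy m
  refine ⟨C₁.toReal * (Real.pi * |L| * M) + 1, by positivity, ?_⟩
  intro u hu _ hlap hL t _ hreg R hR
  have hR0 : 0 < R := by linarith
  have hL0 : 0 ≤ L := (norm_nonneg _).trans (hL 0)
  have hgc : Continuous fun x => ‖gradient u x‖ := by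
    simp_rw [norm_gradient]
    exact (hu.continuous_fderiv (by simp)).norm
  obtain ⟨η, hη, hηc, hη0, hη1, hηM⟩ := hM R hR0
  obtain ⟨ε, hε, hle⟩ := hflux u hu t hreg R hR
  obtain ⟨hGi, hGle⟩ := energy_bound u η L t ε hu hlap hL hη hηc hη0
  have h1 := hle η hη1
  rw [← ofReal_integral_eq_lintegral_ofReal hGi
    (Filter.Eventually.of_forall fun x => by have := hη0 x; simp only [Pi.zero_apply]; positivity)]
    at h1
  rw [integral_eq_lintegral_of_nonneg_ae (Filter.Eventually.of_forall fun _ => norm_nonneg _)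
    hgc.aestronglyMeasurable]
  refine (ENNReal.toReal_mono (ENNReal.mul_ne_top hC₁.ne ENNReal.ofReal_ne_top) h1).trans ?_
  rw [ENNReal.toReal_mul, ENNReal.toReal_ofReal (integral_nonneg fun x => by
    have := hη0 x; simp only [Pi.zero_apply]; positivity)]
  have h2 := hGle.trans (mul_le_mul_of_nonneg_left hηM (by positivity : 0 ≤ Real.pi * L))
  have h3 := mul_le_mul_of_nonneg_left h2 (ENNReal.toReal_nonneg (a := C₁))
  rw [abs_of_nonneg hL0]
  have h4 : 0 < R ^ m := by positivity
  linarith
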